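/- arXiv:1811.06598 — 2 statements merged into one kernel-verified Lean document; each statement's English description precedes it below -/
import Mathlib

section
/- cos(π/7) − cos(2π/7) + cos(2π/21) − cos(5π/21) = 1/2. -/
/-!
With `x = 2π/21`, the angles `5π/21` and `3π/7` are `π/3 - x` and `π/3 + x`, so the two cosines
over `21` collapse to `cos (3π/7)`. As `-cos (2π/7) = cos (5π/7)`, what remains is
`cos (π/7) + cos (3π/7) + cos (5π/7)`, a sum of cosines in arithmetic progression, equal to
`sin (6π/7) / (2 sin (π/7)) = 1/2`.
-/

open Real

theorem cos_pi_div_three_sub_add_cos_pi_div_three_add (x : ℝ) :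
    cos (π / 3 - x) + cos (π / 3 + x) = cos x := by
  rw [cos_sub, cos_add, cos_pi_div_three]
  ring

theorem two_mul_sin_mul_sum_cos_odd_mul (x : ℝ) (n : ℕ) :
    2 * sin x * ∑ k ∈ Finset.range n, cos ((2 * k + 1) * x) = sin (2 * n * x) := by
  have closed_form : sin x * ∑ k ∈ Finset.range n, cos ((2 * k + 1) * x) =
      sin (n * x) * cos (n * x) := by
    convert sin_mul_sum_cos n (2 * x) x using 4 <;> ring
  calc 2 * sin x * ∑ k ∈ Finset.range n, cos ((2 * k + 1) * x)
      = 2 * sin (n * x) * cos (n * x) := by rw [mul_assoc, closed_form, mul_assoc]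
    _ = sin (2 * n * x) := by rw [← sin_two_mul, mul_assoc]

theorem sum_cos_odd_mul_pi_div_two_mul_add_one {n : ℕ} (hn : n ≠ 0) :
    ∑ k ∈ Finset.range n, cos ((2 * k + 1) * (π / (2 * n + 1))) = 1 / 2 := by
  set θ := π / (2 * n + 1) with hθ
  have sin_pos : 0 < sin θ := by
    have : (0 : ℝ) < n := by positivity
    exact sin_pos_of_pos_of_lt_pi (by positivity) (div_lt_self pi_pos (by linarith))
  have reflection : sin (2 * n * θ) = sin θ := by
    have : 2 * n * θ = π - θ := by
      rw [hθ]
      field_simp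
      ring
    rw [this, sin_pi_sub]
  apply mul_left_cancel₀ sin_pos.ne'
  linarith [two_mul_sin_mul_sum_cos_odd_mul θ n]

theorem conway_jones_item8 :
    Real.cos (π / 7) - Real.cos (2 * π / 7) + Real.cos (2 * π / 21) - Real.cos (5 * π / 21)
      = 1 / 2 := by
  have three_term : cos (5 * π / 21) + cos (3 * π / 7) = cos (2 * π / 21) := by
    convert cos_pi_div_three_sub_add_cos_pi_div_three_add (2 * π / 21) using 3 <;> ring
  have odd_sevenths : cos (π / 7) + cos (3 * π / 7) + cos (5 * π / 7) = 1 / 2 := by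
    rw [← sum_cos_odd_mul_pi_div_two_mul_add_one three_ne_zero]
    norm_num [Finset.sum_range_succ, mul_div_assoc]
  have supplement : cos (5 * π / 7) = -cos (2 * π / 7) := by
    rw [← cos_pi_sub]
    ring_nf
  linarith
end

section
/- The 4×4 real symmetric matrix G with rows (1, −cos r, −cos p, −cos q), (−cos r, 1, −cos q, −cos p), (−cos p, −cos q, 1, −cos s), (−cos q, −cos p, −cos s, 1), where p = 5π/18, q = 2π/9, r = 13π/18, s = 11π/18, is positive definite. -/
open Real

/-! The involution exchanging the faces `0 ↔ 1` and `2 ↔ 3` fixes the Gram matrix, which therefore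
splits over its `±1`-eigenspaces into two `2 × 2` blocks. The angles of `T` are the member
`t = π / 18` of the family `(π/4 + t/2, π/4 - t/2, 2π/3 + t, 2π/3 - t)`, along which both blocks
have the same determinant `cos² t - 3/4 = cos² t - cos² (π/6)`. -/

section PosDef

open Matrix

variable {m n R : Type*} [Ring R] [PartialOrder R] [StarRing R]

theorem posDef_submatrix_equiv_iff {M : Matrix n n R} (e : m ≃ n) :
    (M.submatrix e e).PosDef ↔ M.PosDef :=
  ⟨fun h ↦ by simpa using h.submatrix e.symm.injective, fun h ↦ h.submatrix e.injective⟩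

theorem posDef_smul_iff [Algebra ℝ R] [StarModule ℝ R] [PosSMulStrictMono ℝ R] {c : ℝ}
    (hc : 0 < c) {A : Matrix n n R} : (c • A).PosDef ↔ A.PosDef :=
  ⟨fun h ↦ by simpa [smul_smul, hc.ne'] using h.smul (inv_pos.2 hc), fun h ↦ h.smul hc⟩

variable [AddLeftMono R] [Finite m] [Finite n]

theorem posDef_fromBlocks_zero_iff {A : Matrix m m R} {D : Matrix n n R} :
    (fromBlocks A 0 0 D).PosDef ↔ A.PosDef ∧ D.PosDef := by
  have := Fintype.ofFinite m
  have := Fintype.ofFinite n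
  constructor
  · exact fun h ↦ ⟨h.submatrix Sum.inl_injective, h.submatrix Sum.inr_injective⟩
  · rintro ⟨hA, hD⟩
    refine .of_dotProduct_mulVec_pos
      (hA.isHermitian.fromBlocks conjTranspose_zero hD.isHermitian) fun x hx ↦ ?_
    obtain ⟨u, v, rfl⟩ : ∃ u v, x = Sum.elim u v := ⟨_, _, (Sum.elim_comp_inl_inr x).symm⟩
    have hsplit : star (Sum.elim u v) ⬝ᵥ (fromBlocks A 0 0 D *ᵥ Sum.elim u v) =
        star u ⬝ᵥ (A *ᵥ u) + star v ⬝ᵥ (D *ᵥ v) := by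
      simp [fromBlocks_mulVec, Function.star_sumElim]
    rw [hsplit]
    rcases eq_or_ne u 0 with rfl | hu
    · have hv : v ≠ 0 := by
        rintro rfl
        exact hx Sum.elim_zero_zero
      simpa using hD.dotProduct_mulVec_pos hv
    · exact add_pos_of_pos_of_nonneg (hA.dotProduct_mulVec_pos hu)
        (hD.posSemidef.dotProduct_mulVec_nonneg v)

theorem posDef_fromBlocks_swap_iff [Algebra ℝ R] [StarModule ℝ R] [PosSMulStrictMono ℝ R]
    {A B : Matrix n n R} :
    (fromBlocks A B B A).PosDef ↔ (A + B).PosDef ∧ (A - B).PosDef := by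
  classical
  have := Fintype.ofFinite n
  set U : Matrix (n ⊕ n) (n ⊕ n) R := fromBlocks 1 1 1 (-1)
  have hsq : U * U = (2 : ℝ) • 1 := by
    simp [U, fromBlocks_multiply, ← fromBlocks_one, two_smul ℝ, fromBlocks_add]
  have hU : IsUnit U := ⟨⟨U, (2 : ℝ)⁻¹ • U, by simp [hsq], by simp [hsq]⟩, rfl⟩
  have hconj : star U * fromBlocks A B B A * U = (2 : ℝ) • fromBlocks (A + B) 0 0 (A - B) := by
    simp only [U, star_eq_conjTranspose, fromBlocks_conjTranspose, fromBlocks_multiply,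
      conjTranspose_one, conjTranspose_neg, one_mul, mul_one, neg_mul, mul_neg, two_smul ℝ,
      fromBlocks_add, fromBlocks_inj]
    refine ⟨?_, ?_, ?_, ?_⟩ <;> abel
  rw [← hU.posDef_star_left_conjugate_iff, hconj, posDef_smul_iff two_pos,
    posDef_fromBlocks_zero_iff]

theorem posDef_fin_two_iff {K : Type*} [Field K] [LinearOrder K] [IsStrictOrderedRing K]
    [StarRing K] [TrivialStar K] {a b c : K} :
    !![a, b; b, c].PosDef ↔ 0 < a ∧ b ^ 2 < a * c := by
  have hform (x : Fin 2 → K) : a * (star x ⬝ᵥ (!![a, b; b, c] *ᵥ x)) =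
      (a * x 0 + b * x 1) ^ 2 + (a * c - b ^ 2) * x 1 ^ 2 := by
    simp only [dotProduct, mulVec, Fin.sum_univ_two, Pi.star_apply, star_trivial, of_apply,
      cons_val_zero, cons_val_one]
    ring
  constructor
  · intro h
    have ha : 0 < a := h.diag_pos (i := 0)
    have hx : ![-b, a] ≠ 0 := fun h0 ↦ ha.ne' (congrFun h0 1)
    have hpos := mul_pos ha (h.dotProduct_mulVec_pos hx)
    rw [hform] at hpos
    have : 0 < (a * c - b ^ 2) * a ^ 2 := by simpa [mul_comm] using hpos
    exact ⟨ha, sub_pos.1 (pos_of_mul_pos_left this (sq_nonneg a))⟩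
  · rintro ⟨ha, hdet⟩
    refine .of_dotProduct_mulVec_pos ?_ fun x hx ↦ pos_of_mul_pos_right ?_ ha.le
    · ext i j
      fin_cases i <;> fin_cases j <;> simp
    rw [hform]
    rcases eq_or_ne (x 1) 0 with h1 | h1
    · have h0 : x 0 ≠ 0 := fun h0 ↦ hx (by ext i; fin_cases i <;> assumption)
      have : 0 < (a * x 0) ^ 2 := by positivity
      simpa [h1] using this
    · exact add_pos_of_nonneg_of_pos (sq_nonneg _) (mul_pos (sub_pos.2 hdet) (sq_pos_iff.2 h1))

end PosDef

/-- The Gram matrix of a `ℤ/2`-symmetric spherical tetrahedron with dihedral angles `p, q, r, s`: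
`p` and `q` each occur at a pair of edges exchanged by the symmetry, `r` and `s` at the two edges
it preserves. -/
noncomputable def symmetricGramMatrix (p q r s : ℝ) : Matrix (Fin 4) (Fin 4) ℝ :=
  !![1, -cos r, -cos p, -cos q;
     -cos r, 1, -cos q, -cos p;
     -cos p, -cos q, 1, -cos s;
     -cos q, -cos p, -cos s, 1]

namespace symmetricGramMatrix

/-- The splitting of the faces `0, 1, 2, 3` into `0, 2` and `1, 3`, which the symmetry
`0 ↔ 1, 2 ↔ 3` exchanges. -/
noncomputable def faceSplitting : Fin 4 ≃ Fin 2 ⊕ Fin 2 :=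
  .ofBijective ![.inl 0, .inr 0, .inl 1, .inr 1] (by decide)

theorem eq_submatrix_fromBlocks (p q r s : ℝ) :
    symmetricGramMatrix p q r s =
      (Matrix.fromBlocks !![1, -cos p; -cos p, 1] !![-cos r, -cos q; -cos q, -cos s]
        !![-cos r, -cos q; -cos q, -cos s] !![1, -cos p; -cos p, 1]).submatrix
        faceSplitting faceSplitting := by
  ext i j
  fin_cases i <;> fin_cases j <;> rfl

theorem posDef_iff {p q r s : ℝ} :
    (symmetricGramMatrix p q r s).PosDef ↔
      (cos p + cos q) ^ 2 < (1 - cos r) * (1 - cos s) ∧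
        (cos p - cos q) ^ 2 < (1 + cos r) * (1 + cos s) := by
  have pos_and_sq_lt_iff {a b c : ℝ} (ha : 0 ≤ a) : 0 < a ∧ b ^ 2 < a * c ↔ b ^ 2 < a * c :=
    and_iff_right_of_imp fun h ↦
      ha.lt_of_ne' <| left_ne_zero_of_mul ((sq_nonneg b).trans_lt h).ne'
  have hplus : !![1, -cos p; -cos p, 1] + !![-cos r, -cos q; -cos q, -cos s] =
      !![1 - cos r, -(cos p + cos q); -(cos p + cos q), 1 - cos s] := by
    ext i j
    fin_cases i <;> fin_cases j <;> simp [sub_eq_add_neg, add_comm]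
  have hminus : !![1, -cos p; -cos p, 1] - !![-cos r, -cos q; -cos q, -cos s] =
      !![1 + cos r, -(cos p - cos q); -(cos p - cos q), 1 + cos s] := by
    ext i j
    fin_cases i <;> fin_cases j <;> simp [sub_eq_add_neg, add_comm]
  rw [eq_submatrix_fromBlocks, posDef_submatrix_equiv_iff, posDef_fromBlocks_swap_iff,
    hplus, hminus, posDef_fin_two_iff, posDef_fin_two_iff,
    pos_and_sq_lt_iff (by linarith [cos_le_one r]),
    pos_and_sq_lt_iff (by linarith [neg_one_le_cos r]), neg_sq, neg_sq]

end symmetricGramMatrix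

section Trigonometry

theorem cos_two_pi_div_three : cos (2 * π / 3) = -1 / 2 := by
  rw [show 2 * π / 3 = π - π / 3 by ring, cos_pi_sub, cos_pi_div_three]
  ring

theorem cos_add_add_cos_sub (x y : ℝ) : cos (x + y) + cos (x - y) = 2 * cos x * cos y := by
  rw [two_mul_cos_mul_cos, add_comm]

theorem cos_add_sub_cos_sub (x y : ℝ) : cos (x + y) - cos (x - y) = -2 * sin x * sin y := by
  linear_combination two_mul_sin_mul_sin x y

theorem cos_add_mul_cos_sub (x y : ℝ) :
    cos (x + y) * cos (x - y) = cos x ^ 2 + cos y ^ 2 - 1 := by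
  rw [cos_add, cos_sub]
  linear_combination -sin y ^ 2 * sin_sq_add_cos_sq x - (1 - cos x ^ 2) * sin_sq_add_cos_sq y

end Trigonometry

theorem gram_matrix_T_posDef_general {t : ℝ} :
    (symmetricGramMatrix (π / 4 + t / 2) (π / 4 - t / 2) (2 * π / 3 + t) (2 * π / 3 - t)).PosDef ↔
      3 / 4 < cos t ^ 2 := by
  have hsum : cos (2 * π / 3 + t) + cos (2 * π / 3 - t) = -cos t := by
    rw [cos_add_add_cos_sub, cos_two_pi_div_three]
    ring
  have hprod : cos (2 * π / 3 + t) * cos (2 * π / 3 - t) = cos t ^ 2 - 3 / 4 := by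
    rw [cos_add_mul_cos_sub, cos_two_pi_div_three]
    ring
  have hsq_add : (cos (π / 4 + t / 2) + cos (π / 4 - t / 2)) ^ 2 = 1 + cos t := by
    rw [cos_add_add_cos_sub, mul_pow, mul_pow, cos_pi_div_four, div_pow, sq_sqrt zero_le_two,
      cos_sq, mul_div_cancel₀ t two_ne_zero]
    ring
  have hsq_sub : (cos (π / 4 + t / 2) - cos (π / 4 - t / 2)) ^ 2 = 1 - cos t := by
    rw [cos_add_sub_cos_sub, mul_pow, mul_pow, sin_pi_div_four, div_pow, sq_sqrt zero_le_two,
      sin_sq_eq_half_sub, mul_div_cancel₀ t two_ne_zero]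
    ring
  have hdet_add : (1 - cos (2 * π / 3 + t)) * (1 - cos (2 * π / 3 - t)) =
      1 + cos t + (cos t ^ 2 - 3 / 4) := by
    linear_combination hprod - hsum
  have hdet_sub : (1 + cos (2 * π / 3 + t)) * (1 + cos (2 * π / 3 - t)) =
      1 - cos t + (cos t ^ 2 - 3 / 4) := by
    linear_combination hprod + hsum
  rw [symmetricGramMatrix.posDef_iff, hsq_add, hsq_sub, hdet_add, hdet_sub, lt_add_iff_pos_right,
    lt_add_iff_pos_right, and_self, sub_pos]

theorem gram_matrix_T_posDef :
    let p : ℝ := 5 * π / 18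
    let q : ℝ := 2 * π / 9
    let r : ℝ := 13 * π / 18
    let s : ℝ := 11 * π / 18
    Matrix.PosDef
      !![1, -Real.cos r, -Real.cos p, -Real.cos q;
         -Real.cos r, 1, -Real.cos q, -Real.cos p;
         -Real.cos p, -Real.cos q, 1, -Real.cos s;
         -Real.cos q, -Real.cos p, -Real.cos s, (1 : ℝ)] := by
  intro p q r s
  have hcos : 3 / 4 < cos (π / 18) ^ 2 := by
    have hlt : cos (π / 6) < cos (π / 18) :=
      cos_lt_cos_of_nonneg_of_le_pi (by positivity) (by linarith [pi_pos]) (by linarith [pi_pos])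
    rw [← sq_cos_pi_div_six]
    gcongr
    rw [cos_pi_div_six]
    positivity
  have hpos := gram_matrix_T_posDef_general.2 hcos
  rwa [show π / 4 + π / 18 / 2 = p by ring, show π / 4 - π / 18 / 2 = q by ring,
    show 2 * π / 3 + π / 18 = r by ring, show 2 * π / 3 - π / 18 = s by ring] at hpos
end
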